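/- (Failure of Prefix Extensibility for mailbox and monobox.) Let A₁, A₂, B be pairwise distinct participants and v a value. Let σ = split((A₁,B,v)·(A₂,B,v)) = A₁▷B!v · A₁▷B?v · A₂▷B!v · A₂▷B?v and let w be the one-event word A₂▷B!v. Then, for 𝒩 ∈ {mailbox, monobox}: w is 𝒩-channel-compliant and w↾r is a prefix of σ↾r for every participant r, yet there exists no finite word u such that w·u is 𝒩-channel-compliant and w·u ≡_𝒫 σ. -/

import Mathlib

/-! Once `a₂▷b!v` has been executed, the message `(a₂,b,v)` sits at the head of the FIFO channel
leading to `b`. Sends only append behind it, and in a word locally equal to `σ` every receive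
event belongs to `b` and the first of them is `a₁▷b?v`. That receive needs `(a₁,b,v)` at the head
of the same channel, which is impossible since `a₁ ≠ a₂`. The only property of the
architectures used is that all messages to `b` share one FIFO channel, so
`not_compliant_completion` treats mailbox and monobox at once. -/

/-- Asynchronous events: send events `p▷q!v` and receive events `p▷q?v`. -/
inductive Event (P V : Type) where
  | send (p q : P) (v : V)
  | recv (p q : P) (v : V)
deriving DecidableEq

/-- The active participant of an event: the sender of a send, the receiver of a receive. -/
def Event.active {P V : Type} : Event P V → P
  | .send p _ _ => p
  | .recv _ q _ => q

/-- A network architecture: channels `C`, buffer contents `B`, a channel map,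
partial insert/remove operations, and an empty buffer. -/
structure NetArch (P V C B : Type) where
  chan : P → P → C
  insert : P × P × V → B → Option B
  remove : P × P × V → B → Option B
  b0 : B

variable {P V C B : Type}

/-- Executing a single event on a channel state. -/
def NetArch.step [DecidableEq C] (N : NetArch P V C B) :
    Event P V → (C → B) → Option (C → B)
  | .send p q v, ξ => (N.insert (p, q, v) (ξ (N.chan p q))).map (Function.update ξ (N.chan p q))
  | .recv p q v, ξ => (N.remove (p, q, v) (ξ (N.chan p q))).map (Function.update ξ (N.chan p q))

/-- Executing a finite word of events from a channel state. -/
def NetArch.runFrom [DecidableEq C] (N : NetArch P V C B) :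
    List (Event P V) → (C → B) → Option (C → B)
  | [], ξ => some ξ
  | e :: w, ξ => (N.step e ξ).bind (N.runFrom w)

/-- The initial channel state: every channel holds the empty buffer. -/
def NetArch.init (N : NetArch P V C B) : C → B := fun _ => N.b0

/-- A finite word is channel-compliant if executing it from the initial channel
state is defined at every step. -/
def NetArch.compliant [DecidableEq C] (N : NetArch P V C B) (w : List (Event P V)) : Prop :=
  (N.runFrom w N.init).isSome

/-- A finite word is channel-matched if it is channel-compliant and reaches the
initial (all-empty) channel state. -/
def NetArch.matched [DecidableEq C] (N : NetArch P V C B) (w : List (Event P V)) : Prop :=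
  N.runFrom w N.init = some N.init

/-- Projection of a word onto the events in which participant `r` is active. -/
def proj [DecidableEq P] (r : P) (w : List (Event P V)) : List (Event P V) :=
  w.filter (fun e => decide (e.active = r))

/-- Equality under local projection. -/
def equivP [DecidableEq P] (w₁ w₂ : List (Event P V)) : Prop :=
  ∀ r : P, proj r w₁ = proj r w₂

/-- `split` replaces every synchronous message exchange `(p,q,v)` by the two
consecutive asynchronous events `p▷q!v · p▷q?v`. -/
def split : List (P × P × V) → List (Event P V)
  | [] => []
  | m :: ρ => Event.send m.1 m.2.1 m.2.2 :: Event.recv m.1 m.2.1 m.2.2 :: split ρ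

/-- FIFO insertion: append at the tail (always defined). -/
def fifoInsert {M : Type} (m : M) (b : List M) : Option (List M) := some (b ++ [m])

/-- FIFO removal: defined iff the buffer has head `m`, removing the head. -/
def fifoRemove {M : Type} [DecidableEq M] (m : M) : List M → Option (List M)
  | [] => none
  | m' :: b => if m' = m then some b else none

/-- Multiset insertion: add one occurrence (always defined). -/
def bagInsert {M : Type} (m : M) (b : Multiset M) : Option (Multiset M) := some (m ::ₘ b)

/-- Multiset removal: defined iff `m ∈ b`, deleting one occurrence. -/
def bagRemove {M : Type} [DecidableEq M] (m : M) (b : Multiset M) : Option (Multiset M) :=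
  if m ∈ b then some (b.erase m) else none

/-- Peer-to-peer FIFO architecture: one FIFO channel per sender-receiver pair. -/
def p2p (P V : Type) [DecidableEq P] [DecidableEq V] :
    NetArch P V (P × P) (List (P × P × V)) :=
  ⟨fun p q => (p, q), fifoInsert, fifoRemove, []⟩

/-- Senderbox FIFO architecture: one FIFO channel per sender. -/
def sb (P V : Type) [DecidableEq P] [DecidableEq V] :
    NetArch P V P (List (P × P × V)) :=
  ⟨fun p _ => p, fifoInsert, fifoRemove, []⟩

/-- Mailbox FIFO architecture: one FIFO channel per receiver. -/
def mb (P V : Type) [DecidableEq P] [DecidableEq V] :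
    NetArch P V P (List (P × P × V)) :=
  ⟨fun _ q => q, fifoInsert, fifoRemove, []⟩

/-- Monobox FIFO architecture: a single FIFO channel shared by all pairs. -/
def monob (P V : Type) [DecidableEq P] [DecidableEq V] :
    NetArch P V Unit (List (P × P × V)) :=
  ⟨fun _ _ => (), fifoInsert, fifoRemove, []⟩

/-- Bag architecture: a single channel holding a multiset of messages. -/
def bag (P V : Type) [DecidableEq P] [DecidableEq V] :
    NetArch P V Unit (Multiset (P × P × V)) :=
  ⟨fun _ _ => (), bagInsert, bagRemove, 0⟩

/-- A FIFO channel `c` carrying all messages to `b`, with `(a₂,b,v)` at its head, blocks every word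
whose receives are all by `b` and whose first event of `b` is `a₁▷b?v`. -/
theorem runFrom_eq_none_of_head {P V C : Type} [DecidableEq P] [DecidableEq V] [DecidableEq C]
    (N : NetArch P V C (List (P × P × V))) (hins : N.insert = fifoInsert)
    (hrem : N.remove = fifoRemove) {a₁ a₂ b : P} {v : V} (h12 : a₁ ≠ a₂) (c : C)
    (hc : ∀ p, N.chan p b = c) (t : List (Event P V)) (u : List (Event P V)) :
    ∀ (ξ : C → List (P × P × V)) (l : List (P × P × V)), ξ c = (a₂, b, v) :: l →
      (∀ p q x, Event.recv p q x ∈ u → q = b) →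
      proj b u = Event.recv a₁ b v :: t → N.runFrom u ξ = none := by
  induction u with
  | nil => intro ξ l _ _ hp; simp [proj] at hp
  | cons e u ih =>
    intro ξ l hξ hr hp
    have hr' : ∀ p q x, Event.recv p q x ∈ u → q = b :=
      fun p q x h => hr p q x (List.mem_cons_of_mem _ h)
    cases e with
    | send p q x =>
      have hpb : p ≠ b := by
        rintro rfl
        simp [proj, Event.active] at hp
      have hp' : proj b u = Event.recv a₁ b v :: t := by
        simpa [proj, Event.active, hpb] using hp
      simp only [NetArch.runFrom, NetArch.step, hins, fifoInsert, Option.map_some,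
        Option.bind_some]
      by_cases hcq : N.chan p q = c
      · exact ih _ (l ++ [(p, q, x)]) (by simp [hcq, hξ]) hr' hp'
      · exact ih _ l (by rw [Function.update_of_ne (Ne.symm hcq), hξ]) hr' hp'
    | recv p q x =>
      obtain rfl : q = b := hr p q x List.mem_cons_self
      obtain ⟨⟨rfl, rfl⟩, -⟩ : (p = a₁ ∧ x = v) ∧ _ := by
        simpa [proj, Event.active] using hp
      simp [NetArch.runFrom, NetArch.step, hrem, hc, hξ, fifoRemove, h12.symm]

theorem not_compliant_completion {P V C : Type} [DecidableEq P] [DecidableEq V] [DecidableEq C]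
    (N : NetArch P V C (List (P × P × V))) (hins : N.insert = fifoInsert)
    (hrem : N.remove = fifoRemove) (hb0 : N.b0 = []) {a₁ a₂ b : P} {v : V} (h12 : a₁ ≠ a₂)
    (h1b : a₁ ≠ b) (h2b : a₂ ≠ b) (c : C) (hc : ∀ p, N.chan p b = c) :
    ¬ ∃ u, N.compliant ([Event.send a₂ b v] ++ u) ∧
      equivP ([Event.send a₂ b v] ++ u) (split [(a₁, b, v), (a₂, b, v)]) := by
  rintro ⟨u, hu, he⟩
  have hr : ∀ p q x, Event.recv p q x ∈ u → q = b := by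
    intro p q x h
    have h1 : Event.recv p q x ∈ proj q ([Event.send a₂ b v] ++ u) := by
      simp [proj, Event.active, h]
    rw [he q] at h1
    have h2 := List.mem_of_mem_filter h1
    simp [split] at h2
    tauto
  have hp : proj b u = [Event.recv a₁ b v, Event.recv a₂ b v] := by
    simpa [proj, split, Event.active, h1b, h2b] using he b
  have hnone := runFrom_eq_none_of_head N hins hrem h12 c hc _ u
    (Function.update N.init c [(a₂, b, v)]) [] (by simp) hr hp
  simp [NetArch.compliant, NetArch.runFrom, NetArch.step, hins, fifoInsert, hc,
    NetArch.init, hb0] at hu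
  simp [hnone] at hu

theorem proj_send_prefix {P V : Type} [DecidableEq P] {a₁ a₂ b : P} {v : V} (h12 : a₁ ≠ a₂)
    (h2b : a₂ ≠ b) (r : P) :
    proj r [Event.send a₂ b v] <+: proj r (split [(a₁, b, v), (a₂, b, v)]) := by
  by_cases h : a₂ = r
  · subst h
    simp [proj, split, Event.active, h12, h2b.symm]
  · simp [proj, Event.active, h]

/-- Failure of Prefix Extensibility for the mailbox and monobox architectures:
for pairwise distinct participants `a₁, a₂, b`, the one-event word
`a₂▷b!v` agrees with `σ = split((a₁,b,v)·(a₂,b,v))` and is channel-compliant,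
yet admits no channel-compliant completion equal to `σ` under local projection. -/
theorem prefix_extensibility_fails_mb_monob {P V : Type} [DecidableEq P] [DecidableEq V]
    (a₁ a₂ b : P) (h12 : a₁ ≠ a₂) (h1b : a₁ ≠ b) (h2b : a₂ ≠ b) (v : V)
    (σ : List (Event P V)) (hσ : σ = split [(a₁, b, v), (a₂, b, v)])
    (w : List (Event P V)) (hw : w = [Event.send a₂ b v]) :
    ((mb P V).compliant w ∧ (∀ r : P, proj r w <+: proj r σ) ∧
      ¬ ∃ u, (mb P V).compliant (w ++ u) ∧ equivP (w ++ u) σ) ∧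
    ((monob P V).compliant w ∧ (∀ r : P, proj r w <+: proj r σ) ∧
      ¬ ∃ u, (monob P V).compliant (w ++ u) ∧ equivP (w ++ u) σ) := by
  subst hσ hw
  refine ⟨⟨?_, proj_send_prefix h12 h2b,
      not_compliant_completion (mb P V) rfl rfl rfl h12 h1b h2b b fun _ => rfl⟩,
    ⟨?_, proj_send_prefix h12 h2b,
      not_compliant_completion (monob P V) rfl rfl rfl h12 h1b h2b () fun _ => rfl⟩⟩
  · simp [NetArch.compliant, NetArch.runFrom, NetArch.step, mb, fifoInsert]
  · simp [NetArch.compliant, NetArch.runFrom, NetArch.step, monob, fifoInsert]
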